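/- Let m₀ ∈ [−1,1] with m₀ ≠ 0, let T > 0, and let T(m₀) ∈ [1/2,2] be the unique solution in [1/2,2] of |m₀| = (2T−1)²(T+4)/(27T). Consider the mean field game system: pairs (z,m) of differentiable functions [0,T] → ℝ satisfying z′(t) = z(t)|z(t)|/2 and m′(t) = −m(t)|z(t)| + z(t) for all t ∈ [0,T], with z(T) = 2m(T) and m(0) = m₀. Then this system admits exactly one solution if T < T(m₀), exactly two distinct solutions if T = T(m₀), and exactly three distinct solutions if T > T(m₀). -/

import Mathlib

/-- A solution of the two-state mean field game system on `[0,T]` with initial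
mean `m₀`: a pair `(z,m)` of functions differentiable on `[0,T]` with
`z′ = z|z|/2`, `m′ = −m|z| + z`, `z(T) = 2m(T)`, `m(0) = m₀`. -/
def MFGSol (T m₀ : ℝ) (z m : ℝ → ℝ) : Prop :=
  (∀ t ∈ Set.Icc (0:ℝ) T,
    HasDerivWithinAt z (z t * |z t| / 2) (Set.Icc (0:ℝ) T) t) ∧
  (∀ t ∈ Set.Icc (0:ℝ) T,
    HasDerivWithinAt m (-(m t) * |z t| + z t) (Set.Icc (0:ℝ) T) t) ∧
  z T = 2 * m T ∧ m 0 = m₀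

/-- The mean field game system has exactly `n` solutions (as pairs of functions
on `[0,T]`). -/
def MFGExactly (T m₀ : ℝ) (n : ℕ) : Prop :=
  ∃ sols : Fin n → (ℝ → ℝ) × (ℝ → ℝ),
    (∀ i, MFGSol T m₀ (sols i).1 (sols i).2) ∧
    (∀ i j, i ≠ j →
      ¬ (Set.EqOn (sols i).1 (sols j).1 (Set.Icc 0 T) ∧
         Set.EqOn (sols i).2 (sols j).2 (Set.Icc 0 T))) ∧
    (∀ z m : ℝ → ℝ, MFGSol T m₀ z m →
      ∃ i, Set.EqOn z (sols i).1 (Set.Icc 0 T) ∧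
           Set.EqOn m (sols i).2 (Set.Icc 0 T))

/-!
The system is autonomous with a locally Lipschitz right-hand side, so a solution is determined by
its value at time `T`, hence, by the terminal coupling, by the terminal mean `x = m T`. Integrating
backwards gives the initial mean as an explicit odd function of `x`, which for `x ≥ 0` is the cubic
`x * (1 + T * (x - 1) * (T * x + 2))`. It remains to count the `x` that are sent to `m₀`.
For `T ≤ 1/2` the cubic is increasing on the positive half-line; for `T > 1/2` it first decreases
and then increases there, with critical point `(2 * T - 1) / (3 * T)` and minimal value
`-(2 * T - 1) ^ 2 * (T + 4) / (27 * T)`. So it takes the value `|m₀|` exactly once, and the value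
`-|m₀|` zero, one or two times according to how `|m₀|` compares with the depth of the minimum,
which increases with `T`; by oddness the latter correspond to the negative `x`, up to the sign
of `m₀`.
-/

open Set

section TerminalValueProblem

variable {E : Type*} [NormedAddCommGroup E] [NormedSpace ℝ E] {v : E → E} {f g : ℝ → E} {a b : ℝ}

lemma eqOn_Icc_of_locallyLipschitz_of_right_eq (hv : LocallyLipschitz v)
    (hf : ∀ t ∈ Icc a b, HasDerivWithinAt f (v (f t)) (Icc a b) t)
    (hg : ∀ t ∈ Icc a b, HasDerivWithinAt g (v (g t)) (Icc a b) t) (hfg : f b = g b) :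
    EqOn f g (Icc a b) := by
  have hfc : ContinuousOn f (Icc a b) := fun t ht ↦ (hf t ht).continuousWithinAt
  have hgc : ContinuousOn g (Icc a b) := fun t ht ↦ (hg t ht).continuousWithinAt
  obtain ⟨K, hK⟩ := hv.locallyLipschitzOn.exists_lipschitzOnWith_of_compact
    ((isCompact_Icc.image_of_continuousOn hfc).union (isCompact_Icc.image_of_continuousOn hgc))
  have hnhds {t : ℝ} (ht : t ∈ Ioc a b) : Icc a b ∈ nhdsWithin t (Iic t) :=
    Filter.mem_of_superset (Icc_mem_nhdsLE ht.1) (Icc_subset_Icc_right ht.2)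
  exact ODE_solution_unique_of_mem_Icc_left (v := fun _ ↦ v) (fun _ _ ↦ hK)
    hfc (fun t ht ↦ (hf t (Ioc_subset_Icc_self ht)).mono_of_mem_nhdsWithin (hnhds ht))
    (fun t ht ↦ .inl (mem_image_of_mem f (Ioc_subset_Icc_self ht)))
    hgc (fun t ht ↦ (hg t (Ioc_subset_Icc_self ht)).mono_of_mem_nhdsWithin (hnhds ht))
    (fun t ht ↦ .inr (mem_image_of_mem g (Ioc_subset_Icc_self ht))) hfg

end TerminalValueProblem

section LevelSets

lemma encard_level_eq_add_of_odd {α β : Type*} [AddCommGroup α] [LinearOrder α]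
    [IsOrderedAddMonoid α] [AddGroup β] {f : α → β} {y : β} (hf : f.Odd) (hy : f 0 ≠ y) :
    {x | f x = y}.encard = {x | 0 < x ∧ f x = y}.encard + {x | 0 < x ∧ f x = -y}.encard := by
  have hsplit : {x | f x = y} = {x | 0 < x ∧ f x = y} ∪ Neg.neg '' {x | 0 < x ∧ f x = -y} := by
    ext x
    rcases lt_trichotomy x 0 with hx | rfl | hx
    · simp [hx, hx.not_gt, hf x]
    · simp [hy]
    · simp [hx, hx.not_gt]
  have hdisj : Disjoint {x | 0 < x ∧ f x = y} (Neg.neg '' {x | 0 < x ∧ f x = -y}) := by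
    rw [Set.disjoint_left]
    rintro _ ⟨hpos, -⟩ ⟨x, ⟨hx, -⟩, rfl⟩
    exact (neg_pos.1 hpos).not_gt hx
  rw [hsplit, encard_union_eq hdisj, neg_injective.encard_image]

variable {α β : Type*} [ConditionallyCompleteLinearOrder α] [TopologicalSpace α] [OrderTopology α]
  [DenselyOrdered α] [LinearOrder β] [TopologicalSpace β] [OrderClosedTopology β]
  {f : α → β} {a s d : α} {y : β}

lemma encard_level_eq_one_of_strictAntiOn_strictMonoOn (had : a ≤ d)
    (hcont : ContinuousOn f (Icc a d)) (hanti : StrictAntiOn f (Icc a s))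
    (hmono : StrictMonoOn f (Ici s)) (hya : f a < y) (hyd : y ≤ f d) :
    {x | a < x ∧ f x = y}.encard = 1 := by
  obtain ⟨b, hb, hfb⟩ := intermediate_value_Ioc had hcont ⟨hya, hyd⟩
  have hright {x : α} (hax : a < x) (hfx : f x = y) : s ≤ x := by
    by_contra! hxs
    have hfxa : f x < f a := hanti ⟨le_rfl, (hax.trans hxs).le⟩ ⟨hax.le, hxs.le⟩ hax
    exact (hfxa.trans hya).ne hfx
  refine encard_eq_one.2 ⟨b, eq_singleton_iff_unique_mem.2 ⟨⟨hb.1, hfb⟩, ?_⟩⟩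
  rintro x ⟨hax, hfx⟩
  exact hmono.injOn (hright hax hfx) (hright hb.1 hfb) (hfx.trans hfb.symm)

lemma encard_level_eq_two_of_strictAntiOn_strictMonoOn (has : a ≤ s) (hsd : s ≤ d)
    (hcont : ContinuousOn f (Icc a d)) (hanti : StrictAntiOn f (Icc a s))
    (hmono : StrictMonoOn f (Ici s)) (hya : y < f a) (hys : f s < y) (hyd : y < f d) :
    {x | a < x ∧ f x = y}.encard = 2 := by
  obtain ⟨b, hb, hfb⟩ := intermediate_value_Ioo' has (hcont.mono (Icc_subset_Icc_right hsd))
    ⟨hys, hya⟩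
  obtain ⟨c, hc, hfc⟩ := intermediate_value_Ioo hsd (hcont.mono (Icc_subset_Icc_left has))
    ⟨hys, hyd⟩
  refine encard_eq_two.2 ⟨b, c, (hb.2.trans hc.1).ne, Subset.antisymm ?_ ?_⟩
  · rintro x ⟨hax, hfx⟩
    rcases le_total x s with hxs | hsx
    · exact .inl (hanti.injOn ⟨hax.le, hxs⟩ (Ioo_subset_Icc_self hb) (hfx.trans hfb.symm))
    · exact .inr (hmono.injOn hsx hc.1.le (hfx.trans hfc.symm))
  · rintro x (rfl | rfl)
    · exact ⟨hb.1, hfb⟩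
    · exact ⟨has.trans_lt hc.1, hfc⟩

end LevelSets

section BackwardSolution

/-- The right-hand side of the mean field game system, as a vector field in `(z, m)`. -/
noncomputable def mfgField (p : ℝ × ℝ) : ℝ × ℝ := (p.1 * |p.1| / 2, -p.2 * |p.1| + p.1)

/-- The `z`-component of the solution with terminal mean `x`, as a function of the time to go
`r = T - t`. -/
noncomputable def backwardZ (r x : ℝ) : ℝ := 2 * x / (1 + r * |x|)

/-- The `m`-component of the solution with terminal mean `x`, as a function of the time to go
`r = T - t`. In particular `backwardM T x` is the initial mean of that solution. -/
def backwardM (r x : ℝ) : ℝ := x * (1 + r * (|x| - 1) * (r * |x| + 2))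

variable {r x T m₀ : ℝ} {z m : ℝ → ℝ}

lemma locallyLipschitz_mfgField : LocallyLipschitz mfgField := by
  have hpoly : ContDiff ℝ 1 fun q : (ℝ × ℝ) × ℝ ↦ (q.1.1 * q.2 / 2, -q.1.2 * q.2 + q.1.1) := by
    fun_prop
  have habs : LocallyLipschitz fun p : ℝ × ℝ ↦ |p.1| :=
    (lipschitzWith_one_norm.comp LipschitzWith.prod_fst).locallyLipschitz
  exact hpoly.locallyLipschitz.comp (LocallyLipschitz.id.prodMk habs)

lemma abs_backwardZ (hr : 0 ≤ r) : |backwardZ r x| = 2 * |x| / (1 + r * |x|) := by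
  have hden : 0 < 1 + r * |x| := by positivity
  rw [backwardZ, abs_div, abs_mul, abs_of_pos hden, abs_two]

lemma hasDerivAt_backwardZ (hr : 0 ≤ r) :
    HasDerivAt (backwardZ · x) (-(backwardZ r x * |backwardZ r x| / 2)) r := by
  have hden : 0 < 1 + r * |x| := by positivity
  have hderiv := (hasDerivAt_const r (2 * x)).fun_div
    (((hasDerivAt_id' r).mul_const |x|).const_add 1) hden.ne'
  refine hderiv.congr_deriv ?_
  rw [abs_backwardZ hr, backwardZ]
  field

lemma hasDerivAt_backwardM (hr : 0 ≤ r) :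
    HasDerivAt (backwardM · x) (-(-backwardM r x * |backwardZ r x| + backwardZ r x)) r := by
  have hid := hasDerivAt_id' r
  have hderiv := (((hid.mul_const (|x| - 1)).fun_mul
    ((hid.mul_const |x|).add_const 2)).const_add 1).const_mul x
  refine hderiv.congr_deriv ?_
  rw [abs_backwardZ hr, backwardZ, backwardM]
  field

lemma mfgSol_backward (T x : ℝ) :
    MFGSol T (backwardM T x) (fun t ↦ backwardZ (T - t) x) (fun t ↦ backwardM (T - t) x) := by
  refine ⟨fun t ht ↦ ?_, fun t ht ↦ ?_, by simp [backwardZ, backwardM], by simp⟩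
  · simpa using ((hasDerivAt_backwardZ (sub_nonneg.2 ht.2)).comp_const_sub T t).hasDerivWithinAt
  · simpa using ((hasDerivAt_backwardM (sub_nonneg.2 ht.2)).comp_const_sub T t).hasDerivWithinAt

lemma MFGSol.hasDerivWithinAt_prodMk (h : MFGSol T m₀ z m) :
    ∀ t ∈ Icc 0 T, HasDerivWithinAt (fun t ↦ (z t, m t)) (mfgField (z t, m t)) (Icc 0 T) t :=
  fun t ht ↦ (h.1 t ht).prodMk (h.2.1 t ht)

lemma MFGSol.eqOn_backward (h : MFGSol T m₀ z m) :
    EqOn z (fun t ↦ backwardZ (T - t) (m T)) (Icc 0 T) ∧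
      EqOn m (fun t ↦ backwardM (T - t) (m T)) (Icc 0 T) := by
  have hterminal : (z T, m T) = (backwardZ (T - T) (m T), backwardM (T - T) (m T)) := by
    simp [backwardZ, backwardM, h.2.2.1]
  have heq := eqOn_Icc_of_locallyLipschitz_of_right_eq locallyLipschitz_mfgField
    h.hasDerivWithinAt_prodMk (mfgSol_backward T (m T)).hasDerivWithinAt_prodMk hterminal
  exact ⟨fun t ht ↦ congrArg Prod.fst (heq ht), fun t ht ↦ congrArg Prod.snd (heq ht)⟩

lemma MFGSol.backwardM_terminal_eq (hT : 0 ≤ T) (h : MFGSol T m₀ z m) :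
    backwardM T (m T) = m₀ := by
  simpa [h.2.2.2] using (h.eqOn_backward.2 (left_mem_Icc.2 hT)).symm

lemma mfgExactly_of_encard_eq {n : ℕ} (hT : 0 ≤ T)
    (hn : {x | backwardM T x = m₀}.encard = n) : MFGExactly T m₀ n := by
  have : Finite {x | backwardM T x = m₀} := finite_of_encard_eq_coe hn
  have e : {x | backwardM T x = m₀} ≃ Fin n :=
    Finite.equivFinOfCardEq (by rw [Nat.card_coe_set_eq, ncard, hn, ENat.toNat_natCast])
  refine ⟨fun i ↦ (fun t ↦ backwardZ (T - t) (e.symm i), fun t ↦ backwardM (T - t) (e.symm i)),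
    fun i ↦ ?_, fun i j hij heq ↦ hij ?_, fun z m h ↦ ⟨e ⟨m T, h.backwardM_terminal_eq hT⟩, ?_⟩⟩
  · simpa only [(e.symm i).2.out] using mfgSol_backward T (e.symm i)
  · have hterminal := heq.2 (right_mem_Icc.2 hT)
    exact e.symm.injective (Subtype.ext (by simpa [backwardM] using hterminal))
  · simpa using h.eqOn_backward

end BackwardSolution

section InitialMean

/-- The initial mean of the solution with terminal mean `x ≥ 0`. -/
def meanCubic (T x : ℝ) : ℝ := x * (1 + T * (x - 1) * (T * x + 2))

/-- The critical point of `meanCubic T` at which it has its local minimum. -/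
noncomputable def foldPoint (T : ℝ) : ℝ := (2 * T - 1) / (3 * T)

/-- The depth of the local minimum of `meanCubic T`; the terminal time `T(m₀)` is characterised by
`foldLevel T(m₀) = |m₀|`. -/
noncomputable def foldLevel (T : ℝ) : ℝ := (2 * T - 1) ^ 2 * (T + 4) / (27 * T)

variable {S T x m₀ : ℝ}

lemma backwardM_odd (T : ℝ) : (backwardM T).Odd := fun x ↦ by simp [backwardM]

lemma backwardM_of_nonneg (T : ℝ) (hx : 0 ≤ x) : backwardM T x = meanCubic T x := by
  rw [backwardM, meanCubic, abs_of_nonneg hx]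

lemma continuous_meanCubic (T : ℝ) : Continuous (meanCubic T) := by
  unfold meanCubic
  fun_prop

lemma meanCubic_zero (T : ℝ) : meanCubic T 0 = 0 := by simp [meanCubic]

lemma meanCubic_one (T : ℝ) : meanCubic T 1 = 1 := by simp [meanCubic]

lemma self_le_meanCubic (hT : 0 ≤ T) (hx : 1 ≤ x) : x ≤ meanCubic T x := by
  have hfactor : 0 ≤ T * (x - 1) * (T * x + 2) :=
    mul_nonneg (mul_nonneg hT (sub_nonneg.2 hx)) (by positivity)
  exact le_mul_of_one_le_right (by positivity) (le_add_of_nonneg_right hfactor)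

lemma hasDerivAt_meanCubic (hT : T ≠ 0) (x : ℝ) :
    HasDerivAt (meanCubic T) (3 * T * (x - foldPoint T) * (T * x + 1)) x := by
  have hid := hasDerivAt_id' x
  have hderiv := hid.fun_mul ((((hid.sub_const 1).const_mul T).fun_mul
    ((hid.const_mul T).add_const 2)).const_add 1)
  refine hderiv.congr_deriv ?_
  rw [foldPoint]
  field

lemma neg_inv_lt_foldPoint (hT : 0 < T) : -T⁻¹ < foldPoint T := by
  have hsub : foldPoint T - -T⁻¹ = 2 * (T + 1) / (3 * T) := by rw [foldPoint]; field
  exact sub_pos.1 (hsub ▸ by positivity)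

lemma mul_add_one_pos (hT : 0 < T) (hx : -T⁻¹ < x) : 0 < T * x + 1 := by
  have hfactor : T * x + 1 = T * (x - -T⁻¹) := by field
  exact hfactor ▸ mul_pos hT (sub_pos.2 hx)

lemma strictMonoOn_meanCubic (hT : 0 < T) : StrictMonoOn (meanCubic T) (Ici (foldPoint T)) := by
  refine strictMonoOn_of_deriv_pos (convex_Ici _) (continuous_meanCubic T).continuousOn ?_
  intro x hx
  rw [interior_Ici, mem_Ioi] at hx
  have hTx : 0 < T * x + 1 := mul_add_one_pos hT ((neg_inv_lt_foldPoint hT).trans hx)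
  rw [(hasDerivAt_meanCubic hT.ne' x).deriv]
  exact mul_pos (mul_pos (by positivity) (sub_pos.2 hx)) hTx

lemma strictAntiOn_meanCubic (hT : 0 < T) :
    StrictAntiOn (meanCubic T) (Icc (-T⁻¹) (foldPoint T)) := by
  refine strictAntiOn_of_deriv_neg (convex_Icc _ _) (continuous_meanCubic T).continuousOn ?_
  intro x hx
  rw [interior_Icc] at hx
  have hTx : 0 < T * x + 1 := mul_add_one_pos hT hx.1
  rw [(hasDerivAt_meanCubic hT.ne' x).deriv]
  exact mul_neg_of_neg_of_pos (mul_neg_of_pos_of_neg (by positivity) (sub_neg.2 hx.2)) hTx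

lemma meanCubic_add_foldLevel (hT : T ≠ 0) (x : ℝ) :
    meanCubic T x + foldLevel T = T * (x - foldPoint T) ^ 2 * (T * x + (T + 4) / 3) := by
  rw [meanCubic, foldLevel, foldPoint]
  field

lemma meanCubic_foldPoint (hT : T ≠ 0) : meanCubic T (foldPoint T) = -foldLevel T := by
  rw [eq_neg_iff_add_eq_zero, meanCubic_add_foldLevel hT, sub_self]
  ring

lemma neg_foldLevel_le_meanCubic (hT : 0 < T) (hx : 0 ≤ x) : -foldLevel T ≤ meanCubic T x := by
  rw [neg_le_iff_add_nonneg, meanCubic_add_foldLevel hT.ne']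
  positivity

lemma meanCubic_eq_neg_foldLevel_iff (hT : 0 < T) (hx : 0 ≤ x) :
    meanCubic T x = -foldLevel T ↔ x = foldPoint T := by
  have hcofactor : T * x + (T + 4) / 3 ≠ 0 := by positivity
  rw [eq_neg_iff_add_eq_zero, meanCubic_add_foldLevel hT.ne']
  simp [hcofactor, hT.ne', sub_eq_zero]

lemma strictMonoOn_foldLevel : StrictMonoOn foldLevel (Ici (1 / 2)) := by
  intro S hS T hT hST
  rw [mem_Ici] at hS hT
  have hS0 : 0 < S := by linarith
  have hT0 : 0 < T := hS0.trans hST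
  have hsum : 0 < S + T - 1 := by linarith
  have hprod : 0 < 4 * (S * T) - 1 := by nlinarith
  have hdiff : foldLevel T - foldLevel S =
      (T - S) * (4 * ((S + T - 1) + (4 * (S * T) - 1) / (S * T)) / 27) := by
    rw [foldLevel, foldLevel]
    field
  have hslope : 0 < 4 * ((S + T - 1) + (4 * (S * T) - 1) / (S * T)) / 27 := by
    have := div_pos hprod (mul_pos hS0 hT0)
    positivity
  exact sub_pos.1 (hdiff ▸ mul_pos (sub_pos.2 hST) hslope)

lemma foldLevel_half : foldLevel (1 / 2) = 0 := by norm_num [foldLevel]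

lemma foldLevel_pos (hT : 1 / 2 < T) : 0 < foldLevel T :=
  foldLevel_half ▸ strictMonoOn_foldLevel self_mem_Ici hT.le hT

lemma foldPoint_pos (hT : 1 / 2 < T) : 0 < foldPoint T :=
  div_pos (by linarith) (by linarith)

lemma foldPoint_nonpos (hT : 0 < T) (hT' : T ≤ 1 / 2) : foldPoint T ≤ 0 :=
  div_nonpos_of_nonpos_of_nonneg (by linarith) (by linarith)

lemma foldPoint_lt_one (hT : 0 < T) : foldPoint T < 1 := by
  rw [foldPoint, div_lt_one (by positivity)]
  linarith

lemma neg_foldLevel_lt_meanCubic_of_lt (hT : 0 < T) (hS : 1 / 2 ≤ S) (hTS : T < S) (hx : 0 < x) :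
    -foldLevel S < meanCubic T x := by
  rcases le_total T (1 / 2) with hT' | hT'
  · have hS0 : 0 ≤ foldLevel S :=
      foldLevel_half ▸ strictMonoOn_foldLevel.monotoneOn self_mem_Ici hS hS
    have hfold : foldPoint T ≤ 0 := foldPoint_nonpos hT hT'
    have hpos : 0 < meanCubic T x :=
      meanCubic_zero T ▸ strictMonoOn_meanCubic hT hfold (hfold.trans hx.le) hx
    linarith
  · calc -foldLevel S < -foldLevel T := neg_lt_neg (strictMonoOn_foldLevel hT' hS hTS)
      _ ≤ meanCubic T x := neg_foldLevel_le_meanCubic hT hx.le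

lemma strictAntiOn_meanCubic_Icc_zero (hT : 0 < T) :
    StrictAntiOn (meanCubic T) (Icc 0 (foldPoint T)) :=
  (strictAntiOn_meanCubic hT).mono (Icc_subset_Icc_left (by simpa using hT.le))

lemma encard_meanCubic_eq_of_pos (hT : 0 < T) {y : ℝ} (hy : 0 < y) :
    {x | 0 < x ∧ meanCubic T x = y}.encard = 1 :=
  encard_level_eq_one_of_strictAntiOn_strictMonoOn (d := max 1 y) (by positivity)
    (continuous_meanCubic T).continuousOn (strictAntiOn_meanCubic_Icc_zero hT)
    (strictMonoOn_meanCubic hT) (by rwa [meanCubic_zero])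
    ((le_max_right 1 y).trans (self_le_meanCubic hT.le (le_max_left 1 y)))

lemma encard_meanCubic_eq_neg_foldLevel_of_lt (hT : 0 < T) (hS : 1 / 2 ≤ S) (hTS : T < S) :
    {x | 0 < x ∧ meanCubic T x = -foldLevel S}.encard = 0 := by
  rw [encard_eq_zero, eq_empty_iff_forall_notMem]
  rintro x ⟨hx, hxS⟩
  exact (neg_foldLevel_lt_meanCubic_of_lt hT hS hTS hx).ne' hxS

lemma encard_meanCubic_eq_neg_foldLevel_self (hT : 1 / 2 < T) :
    {x | 0 < x ∧ meanCubic T x = -foldLevel T}.encard = 1 := by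
  have hT0 : 0 < T := by linarith
  refine encard_eq_one.2 ⟨foldPoint T, eq_singleton_iff_unique_mem.2 ⟨?_, ?_⟩⟩
  · exact ⟨foldPoint_pos hT, meanCubic_foldPoint hT0.ne'⟩
  · exact fun x ⟨hx, hxT⟩ ↦ (meanCubic_eq_neg_foldLevel_iff hT0 hx.le).1 hxT

lemma encard_meanCubic_eq_neg_foldLevel_of_gt (hS : 1 / 2 < S) (hST : S < T) :
    {x | 0 < x ∧ meanCubic T x = -foldLevel S}.encard = 2 := by
  have hT : 1 / 2 < T := hS.trans hST
  have hT0 : 0 < T := by linarith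
  have hS0 : -foldLevel S < 0 := neg_neg_of_pos (foldLevel_pos hS)
  refine encard_level_eq_two_of_strictAntiOn_strictMonoOn (foldPoint_pos hT).le
    (foldPoint_lt_one hT0).le (continuous_meanCubic T).continuousOn
    (strictAntiOn_meanCubic_Icc_zero hT0) (strictMonoOn_meanCubic hT0) ?_ ?_ ?_
  · rwa [meanCubic_zero]
  · rw [meanCubic_foldPoint hT0.ne']
    exact neg_lt_neg (strictMonoOn_foldLevel hS.le hT.le hST)
  · rw [meanCubic_one]
    exact hS0.trans one_pos

lemma encard_backwardM_eq (hT : 0 < T) (hm₀ : m₀ ≠ 0) :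
    {x | backwardM T x = m₀}.encard = 1 + {x | 0 < x ∧ meanCubic T x = -|m₀|}.encard := by
  have hcubic (y : ℝ) : {x | 0 < x ∧ backwardM T x = y} = {x | 0 < x ∧ meanCubic T x = y} := by
    ext x
    exact and_congr_right fun hx ↦ by rw [backwardM_of_nonneg T hx.le]
  have hzero : backwardM T 0 ≠ m₀ := by simpa [(backwardM_odd T).map_zero] using hm₀.symm
  rw [encard_level_eq_add_of_odd (backwardM_odd T) hzero, hcubic, hcubic,
    ← encard_meanCubic_eq_of_pos hT (abs_pos.2 hm₀)]
  rcases abs_choice m₀ with habs | habs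
  · rw [habs]
  · rw [habs, neg_neg, add_comm]

end InitialMean

theorem stmt_8_general (m₀ T Tm : ℝ) (hm₀ : m₀ ≠ 0) (hT : 0 < T) (hTm : 1 / 2 ≤ Tm)
    (hlevel : |m₀| = (2 * Tm - 1) ^ 2 * (Tm + 4) / (27 * Tm)) :
    (T < Tm → MFGExactly T m₀ 1) ∧
    (T = Tm → MFGExactly T m₀ 2) ∧
    (Tm < T → MFGExactly T m₀ 3) := by
  have hfold : |m₀| = foldLevel Tm := hlevel
  have hTm' : 1 / 2 < Tm := by
    refine hTm.lt_of_ne fun h ↦ hm₀ ?_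
    rw [← abs_eq_zero, hfold, ← h, foldLevel_half]
  have hcount := encard_backwardM_eq hT hm₀
  rw [hfold] at hcount
  refine ⟨fun hlt ↦ ?_, fun heq ↦ ?_, fun hgt ↦ ?_⟩ <;> apply mfgExactly_of_encard_eq hT.le
  · rw [hcount, encard_meanCubic_eq_neg_foldLevel_of_lt hT hTm hlt]
    norm_num
  · subst heq
    rw [hcount, encard_meanCubic_eq_neg_foldLevel_self hTm']
    norm_num
  · rw [hcount, encard_meanCubic_eq_neg_foldLevel_of_gt hTm' hgt]
    norm_num

/-- Let `m₀ ∈ [−1,1] \ {0}`, `T > 0`, and `Tm ∈ [1/2,2]` the solution of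
`|m₀| = (2T−1)²(T+4)/(27T)` in `[1/2,2]`. Then the mean field game system has
exactly one solution if `T < Tm`, exactly two if `T = Tm`, exactly three if
`T > Tm`. -/
theorem stmt_8 (m₀ T Tm : ℝ) (hm₀ : m₀ ∈ Set.Icc (-1:ℝ) 1) (hm₀ne : m₀ ≠ 0)
    (hT : 0 < T)
    (hTm : Tm ∈ Set.Icc (1/2 : ℝ) 2 ∧ |m₀| = (2*Tm - 1)^2 * (Tm + 4) / (27*Tm)) :
    (T < Tm → MFGExactly T m₀ 1) ∧
    (T = Tm → MFGExactly T m₀ 2) ∧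
    (Tm < T → MFGExactly T m₀ 3) := by
  exact stmt_8_general m₀ T Tm hm₀ne hT hTm.1.1 hTm.2
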